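/- arXiv:2506.10827 — 2 statements merged into one kernel-verified Lean document; each statement's English description precedes it below -/
import Mathlib

section
/- Let (Q,m) be a regular local ring with residue field k, let x₁,…,x_d ∈ m be a regular sequence on Q, and let f₁,…,f_n be monomials on x (each f_j = ∏_l x_l^{(a_j)_l} with a_j ∈ ℕ^d, a_j ≠ 0) that minimally generate an ideal I ⊆ m² (i.e., the images of f₁,…,f_n form a k-basis of I/mI). If R = Q/I admits an embedded deformation of codimension c, then there exists a subset S ⊆ {1,…,n} with |S| = c such that: (i) for every i ∈ S and every j ∈ {1,…,n} with j ≠ i, the supports of f_i and f_j are disjoint; and (ii) the family (f_i)_{i∈S} is a regular sequence on Q/(f_j : j ∉ S), so that I = (f_j : j ∉ S) + (f_i : i ∈ S) exhibits an embedded deformation of codimension c defined by monomials. -/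
open RingTheory.Sequence IsLocalRing

/-- `Q` is a regular local ring: its maximal ideal is generated by `dim Q` many elements. -/
def IsRegularLocal (Q : Type*) [CommRing Q] [IsNoetherianRing Q] [IsLocalRing Q] : Prop :=
  ∃ s : Finset Q, Ideal.span (s : Set Q) = maximalIdeal Q ∧
    (s.card : WithBot (WithTop ℕ)) = ringKrullDim Q

/-- `R = Q/I` admits an embedded deformation of codimension `c`: there are an ideal `J ⊆ I`
and elements `g₁,…,g_c ∈ I` with `I = J + (g₁,…,g_c)` and `g₁,…,g_c` a regular sequence on
`Q/J`. -/
def HasEmbeddedDeformation {Q : Type*} [CommRing Q] (I : Ideal Q) (c : ℕ) : Prop :=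
  ∃ (J : Ideal Q) (g : Fin c → Q), J ≤ I ∧ (∀ i, g i ∈ I) ∧
    I = J ⊔ Ideal.span (Set.range g) ∧
    IsRegular (Q ⧸ J) (List.ofFn g)

/-!
An embedded deformation `I = J + (g₁,…,g_c)` gives a surjection `I → (Q/I)^c` that reads off the
coefficients of the `g_i`: these are well defined modulo `I` because the relations among the `g_i`
on `Q/J` have coefficients in `(g₁,…,g_c)`. Comparing ranks over `Q/(x)`, at least `c` of the
monomials `f_i` have a coefficient `r` outside `(x)`. For `j ≠ i`, applying a component of the
surjection to the syzygy `x^(a_j - a_i) f_i = x^(a_i - a_j) f_j`, with truncated differences of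
exponents, puts `x^(a_j - a_i) r` in the ideal generated by `x^(a_i - a_j)` and `I`. Since
`r ∉ (x)`, either `x^(a_i - a_j)` or some `f_k` divides `x^(a_j - a_i)`, which for incomparable
exponents leaves only `f_j`, and `f_j` divides `x^(a_j - a_i)` only if `f_i` and `f_j` have disjoint
supports.
Finally, a monomial is regular modulo any ideal generated by monomials of disjoint support.
-/

section Monomials

lemma single_one_le_iff {ι : Type*} [DecidableEq ι] {v : ι → ℕ} {p : ι} :
    Pi.single p 1 ≤ v ↔ v p ≠ 0 := by
  simp only [Pi.single, update_le_iff, Nat.one_le_iff_ne_zero, Pi.zero_apply, zero_le,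
    implies_true, and_true]

variable {Q ι : Type*} [CommSemiring Q] [Fintype ι]

/-- The monomial `∏ l, x l ^ v l` on the family `x`, with exponent vector `v`. -/
def monomialOn (x : ι → Q) (v : ι → ℕ) : Q :=
  ∏ l, x l ^ v l

/-- The ideal generated by the monomials on `x` whose exponent vectors lie in `U`. -/
def monomialIdeal (x : ι → Q) (U : Set (ι → ℕ)) : Ideal Q :=
  Ideal.span (monomialOn x '' U)

variable {x : ι → Q} {u v : ι → ℕ} {U V : Set (ι → ℕ)} {p : ι}

lemma monomialOn_zero : monomialOn x 0 = 1 := by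
  simp [monomialOn]

lemma monomialOn_add : monomialOn x (u + v) = monomialOn x u * monomialOn x v := by
  simp [monomialOn, pow_add, Finset.prod_mul_distrib]

lemma monomialOn_single [DecidableEq ι] (k : ℕ) : monomialOn x (Pi.single p k) = x p ^ k := by
  rw [monomialOn, Fintype.prod_eq_single p fun l hl => by rw [Pi.single_eq_of_ne hl, pow_zero],
    Pi.single_eq_same]

lemma monomialOn_single_one [DecidableEq ι] : monomialOn x (Pi.single p 1) = x p := by
  rw [monomialOn_single, pow_one]

lemma monomialOn_dvd_of_le (h : u ≤ v) : monomialOn x u ∣ monomialOn x v :=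
  Finset.prod_dvd_prod_of_dvd _ _ fun l _ => pow_dvd_pow (x l) (h l)

lemma monomialOn_eq_mul_of_ne_zero [DecidableEq ι] (h : v p ≠ 0) :
    monomialOn x v = x p * monomialOn x (v - Pi.single p 1) := by
  rw [← monomialOn_single_one (x := x), ← monomialOn_add,
    add_tsub_cancel_of_le (single_one_le_iff.2 h)]

lemma monomialOn_mem_monomialIdeal (hu : u ∈ U) (h : u ≤ v) :
    monomialOn x v ∈ monomialIdeal x U :=
  Ideal.mem_of_dvd _ (monomialOn_dvd_of_le h) (Ideal.subset_span (Set.mem_image_of_mem _ hu))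

lemma monomialIdeal_le_iff {K : Ideal Q} :
    monomialIdeal x U ≤ K ↔ ∀ v ∈ U, monomialOn x v ∈ K :=
  Ideal.span_le.trans Set.forall_mem_image

lemma monomialIdeal_mono (h : U ⊆ V) : monomialIdeal x U ≤ monomialIdeal x V :=
  Ideal.span_mono (Set.image_mono h)

lemma monomialIdeal_insert :
    monomialIdeal x (insert v U) = Ideal.span {monomialOn x v} ⊔ monomialIdeal x U := by
  rw [monomialIdeal, Set.image_insert_eq, Ideal.span_insert, monomialIdeal]

lemma monomialIdeal_union :
    monomialIdeal x (U ∪ V) = monomialIdeal x U ⊔ monomialIdeal x V := by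
  rw [monomialIdeal, Set.image_union, Ideal.span_union, monomialIdeal, monomialIdeal]

lemma span_image_monomialOn_comp {κ : Type*} {a : κ → ι → ℕ} {T : Set κ} :
    Ideal.span ((monomialOn x ∘ a) '' T) = monomialIdeal x (a '' T) := by
  rw [Set.image_comp, monomialIdeal]

lemma ofList_map_monomialOn {us : List (ι → ℕ)} :
    Ideal.ofList (us.map (monomialOn x)) = monomialIdeal x {u | u ∈ us} := by
  rw [Ideal.ofList, monomialIdeal]
  congr 1
  ext y
  exact List.mem_map

lemma monomialIdeal_eq_top_of_zero_mem (h : 0 ∈ U) : monomialIdeal x U = ⊤ :=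
  (Ideal.eq_top_iff_one _).2 (monomialOn_zero (x := x) ▸ monomialOn_mem_monomialIdeal h le_rfl)

lemma monomialIdeal_le_span_range (h : 0 ∉ U) :
    monomialIdeal x U ≤ Ideal.span (Set.range x) := by
  refine monomialIdeal_le_iff.2 fun v hv => ?_
  obtain ⟨l, hl⟩ := Function.ne_iff.1 (ne_of_mem_of_not_mem hv h)
  exact Ideal.mem_of_dvd _ ((dvd_pow_self (x l) hl).trans (Finset.dvd_prod_of_mem _
    (Finset.mem_univ l))) (Ideal.subset_span (Set.mem_range_self l))

lemma monomialIdeal_le_monomialIdeal_image_tsub (w : ι → ℕ) :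
    monomialIdeal x U ≤ monomialIdeal x ((· - w) '' U) :=
  monomialIdeal_le_iff.2 fun _ hv =>
    monomialOn_mem_monomialIdeal (Set.mem_image_of_mem _ hv) tsub_le_self

lemma monomialIdeal_eq_sup_span_mul [DecidableEq ι] (x : ι → Q) (U : Set (ι → ℕ)) (p : ι) :
    monomialIdeal x U = monomialIdeal x {v ∈ U | v p = 0} ⊔
      Ideal.span {x p} * monomialIdeal x ((· - Pi.single p 1) '' U) := by
  refine le_antisymm (monomialIdeal_le_iff.2 fun v hv => ?_)
    (sup_le (monomialIdeal_mono (Set.sep_subset _ _)) ?_)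
  · by_cases hvp : v p = 0
    · exact Ideal.mem_sup_left (monomialOn_mem_monomialIdeal ⟨hv, hvp⟩ le_rfl)
    · rw [monomialOn_eq_mul_of_ne_zero hvp]
      exact Ideal.mem_sup_right (Ideal.mul_mem_mul (Ideal.mem_span_singleton_self _)
        (monomialOn_mem_monomialIdeal (Set.mem_image_of_mem _ hv) le_rfl))
  · rw [monomialIdeal, Ideal.span_mul_span', Ideal.span_le]
    rintro _ ⟨_, rfl, _, ⟨_, ⟨v, hv, rfl⟩, rfl⟩, rfl⟩
    change x p * monomialOn x (v - Pi.single p 1) ∈ monomialIdeal x U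
    rw [← monomialOn_single_one (x := x), ← monomialOn_add]
    exact monomialOn_mem_monomialIdeal hv le_add_tsub

end Monomials

section ColonIdeals

variable {Q : Type*} [CommRing Q] {A B K : Ideal Q} {y z : Q}

lemma isSMulRegular_quotient_iff_mem_of_mul_mem :
    IsSMulRegular (Q ⧸ K) y ↔ ∀ q, y * q ∈ K → q ∈ K :=
  isSMulRegular_quotient_iff_mem_of_smul_mem K y

/-- Multiplication by `y` embeds `Q ⧸ B` into `Q ⧸ (A + yB)` with cokernel `Q ⧸ (A + (y))`, and
`z` is regular on both. -/
lemma isSMulRegular_quotient_sup_span_mul (hAB : A ≤ B) (hy : IsSMulRegular (Q ⧸ A) y)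
    (hA : IsSMulRegular (Q ⧸ (Ideal.span {y} ⊔ A)) z) (hB : IsSMulRegular (Q ⧸ B) z) :
    IsSMulRegular (Q ⧸ (A ⊔ Ideal.span {y} * B)) z := by
  rw [isSMulRegular_quotient_iff_mem_of_mul_mem] at hy hA hB ⊢
  intro q hq
  have hle : A ⊔ Ideal.span {y} * B ≤ Ideal.span {y} ⊔ A :=
    sup_le le_sup_right (Ideal.mul_le_left.trans le_sup_left)
  obtain ⟨t, α, hα, rfl⟩ := Ideal.mem_span_singleton_sup.1 (hA q (hle hq))
  have hzty : z * (t * y) ∈ A ⊔ Ideal.span {y} * B := by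
    simpa only [mul_add, add_sub_cancel_right] using
      Ideal.sub_mem _ hq (Ideal.mem_sup_left (Ideal.mul_mem_left _ z hα))
  obtain ⟨α', hα', _, hyb, hsum⟩ := Submodule.mem_sup.1 hzty
  obtain ⟨b, hb, rfl⟩ := Ideal.mem_span_singleton_mul.1 hyb
  have hztb : z * t - b ∈ A := hy _ (by
    rwa [show y * (z * t - b) = α' by linear_combination -hsum])
  have hzt : z * t ∈ B := by simpa only [sub_add_cancel] using B.add_mem (hAB hztb) hb
  rw [mul_comm t y]
  exact Ideal.add_mem _ (Ideal.mem_sup_right (Ideal.mul_mem_mul (Ideal.mem_span_singleton_self y)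
    (hB t hzt))) (Ideal.mem_sup_left hα)

lemma span_range_eq_sup_compl {ι : Type*} (w : ι → Q) (p : ι) :
    Ideal.span (Set.range w) = Ideal.span {w p} ⊔ Ideal.span (w '' {p}ᶜ) := by
  rw [← Ideal.span_union, ← Set.image_singleton, ← Set.image_union, Set.union_compl_self,
    Set.image_univ]

lemma mem_span_singleton_sup_of_mul_mem (hy : IsSMulRegular (Q ⧸ K) y) {q : Q}
    (hq : y * q ∈ Ideal.span {y * z} ⊔ K) : q ∈ Ideal.span {z} ⊔ K := by
  obtain ⟨t, k, hk, hsum⟩ := Ideal.mem_span_singleton_sup.1 hq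
  have hqt : q - t * z ∈ K := isSMulRegular_quotient_iff_mem_of_mul_mem.1 hy _ (by
    rwa [show y * (q - t * z) = k by linear_combination -hsum])
  exact Ideal.mem_span_singleton_sup.2 ⟨t, _, hqt, add_sub_cancel _ _⟩

end ColonIdeals

section PermutableSequences

/-- The family `x` is a weakly regular sequence in every order; equivalently, each `x l` is a
nonzerodivisor modulo any finite set of other members of the family, which is the form used
here. -/
def IsPermutableWeaklyRegular {Q ι : Type*} [CommRing Q] (x : ι → Q) : Prop :=
  ∀ (T : Finset ι) (l : ι), l ∉ T → IsSMulRegular (Q ⧸ Ideal.span (x '' (T : Set ι))) (x l)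

lemma isPermutableWeaklyRegular_of_isRegular {Q : Type*} [CommRing Q] [IsNoetherianRing Q]
    [IsLocalRing Q] {d : ℕ} {x : Fin d → Q} (hx : IsRegular Q (List.ofFn x)) :
    IsPermutableWeaklyRegular x := by
  intro T l hl
  have hnodup : (l :: T.toList).Nodup :=
    List.nodup_cons.2 ⟨Finset.mem_toList.not.2 hl, T.nodup_toList⟩
  obtain ⟨L', hL', hsub⟩ := hnodup.subperm fun i _ => List.mem_finRange i
  obtain ⟨L, hL⟩ := hsub.exists_perm_append
  have hperm : (List.ofFn x).Perm (T.toList.map x ++ x l :: L.map x) := by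
    rw [List.ofFn_eq_map]
    simpa only [List.map_append, List.map_cons] using
      ((hL.trans (hL'.append_right L)).trans List.perm_middle.symm).map x
  have hreg := (isWeaklyRegular_append_iff Q _ _).1
    (IsLocalRing.isRegular_of_perm hx hperm).toIsWeaklyRegular
  have hideal : (Ideal.ofList (T.toList.map x) • ⊤ : Submodule Q Q) =
      Ideal.span (x '' (T : Set (Fin d))) := by
    rw [smul_eq_mul, Ideal.mul_top, Ideal.ofList]
    congr 1
    ext y
    simp
  rw [← hideal]
  exact ((isWeaklyRegular_cons_iff _ _ _).1 hreg.2).1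

end PermutableSequences

section RegularSequences

variable {R M : Type*} [CommRing R] [AddCommGroup M] [Module R M]

lemma ofList_ofFn {c : ℕ} (g : Fin c → R) :
    Ideal.ofList (List.ofFn g) = Ideal.span (Set.range g) := by
  simp only [Ideal.ofList, List.mem_ofFn]
  rfl

lemma mem_span_range_smul_top_iff {c : ℕ} {g : Fin c → R} {m : M} :
    m ∈ (Ideal.span (Set.range g) • ⊤ : Submodule R M) ↔ ∃ e : Fin c → M, ∑ i, g i • e i = m := by
  constructor
  · intro hm
    refine Submodule.smul_induction_on hm (fun r hr n _ => ?_) fun m₁ m₂ h₁ h₂ => ?_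
    · obtain ⟨b, rfl⟩ := Ideal.mem_span_range_iff_exists_fun.1 hr
      exact ⟨fun i => b i • n, by simp only [Finset.sum_smul, smul_smul, mul_comm]⟩
    · obtain ⟨e₁, rfl⟩ := h₁
      obtain ⟨e₂, rfl⟩ := h₂
      exact ⟨e₁ + e₂, by simp only [Pi.add_apply, smul_add, Finset.sum_add_distrib]⟩
  · rintro ⟨e, rfl⟩
    exact Submodule.sum_mem _ fun i _ =>
      Submodule.smul_mem_smul (Ideal.subset_span (Set.mem_range_self i)) Submodule.mem_top

lemma mem_smul_top_of_sum_smul_eq_zero {c : ℕ} {g : Fin c → R} {m : Fin c → M}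
    (hg : IsWeaklyRegular M (List.ofFn g)) (hm : ∑ i, g i • m i = 0) (i : Fin c) :
    m i ∈ (Ideal.span (Set.range g) • ⊤ : Submodule R M) := by
  induction c with
  | zero => exact i.elim0
  | succ c ih =>
    set g' : Fin c → R := fun j => g j.castSucc with hg'
    rw [List.ofFn_succ', List.concat_eq_append, isWeaklyRegular_append_iff,
      isWeaklyRegular_singleton_iff, ofList_ofFn] at hg
    rw [Fin.sum_univ_castSucc] at hm
    have hmono : (Ideal.span (Set.range g') • ⊤ : Submodule R M) ≤
        Ideal.span (Set.range g) • ⊤ :=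
      Submodule.smul_mono_left (Ideal.span_mono (Set.range_comp_subset_range Fin.castSucc g))
    have hlast : m (Fin.last c) ∈ (Ideal.span (Set.range g') • ⊤ : Submodule R M) := by
      refine (isSMulRegular_quotient_iff_mem_of_smul_mem _ _).1 hg.2 _ ?_
      rw [← neg_eq_of_add_eq_zero_right hm, mem_span_range_smul_top_iff]
      exact ⟨fun j => - m j.castSucc, by simp only [smul_neg, Finset.sum_neg_distrib]⟩
    obtain ⟨e, he⟩ := mem_span_range_smul_top_iff.1 hlast
    induction i using Fin.lastCases with
    | last => exact hmono hlast
    | cast i =>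
      have hsum : ∑ j, g' j • (m j.castSucc + g (Fin.last c) • e j) = 0 := by
        rw [← hm, ← he, Finset.smul_sum, ← Finset.sum_add_distrib]
        simp only [hg', smul_add, smul_comm (g (Fin.last c))]
      rw [← add_sub_cancel_right (m i.castSucc) (g (Fin.last c) • e i)]
      exact Submodule.sub_mem _ (hmono (ih hg.1 hsum i)) (Submodule.smul_mem_smul
        (Ideal.subset_span (Set.mem_range_self _)) Submodule.mem_top)

lemma mk_mem_smul_top_iff {J A : Ideal R} {q : R} :
    Ideal.Quotient.mk J q ∈ (A • ⊤ : Submodule R (R ⧸ J)) ↔ q ∈ J ⊔ A := by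
  rw [Ideal.smul_top_eq_map, Submodule.restrictScalars_mem, Ideal.Quotient.algebraMap_eq,
    Ideal.mem_quotient_iff_mem_sup, sup_comm]

lemma smul_top_quotient_eq_top_iff {J A : Ideal R} :
    (A • ⊤ : Submodule R (R ⧸ J)) = ⊤ ↔ J ⊔ A = ⊤ := by
  simp only [Submodule.eq_top_iff', Ideal.Quotient.mk_surjective.forall, mk_mem_smul_top_iff]

lemma isWeaklyRegular_quotient_iff_take {J : Ideal R} {rs : List R} :
    IsWeaklyRegular (R ⧸ J) rs ↔
      ∀ i (h : i < rs.length), IsSMulRegular (R ⧸ J ⊔ Ideal.ofList (rs.take i)) rs[i] := by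
  rw [isWeaklyRegular_iff]
  refine forall₂_congr fun i h => ?_
  rw [isSMulRegular_quotient_iff_mem_of_mul_mem, isSMulRegular_quotient_iff_mem_of_smul_mem,
    Ideal.Quotient.mk_surjective.forall]
  refine forall_congr' fun q => ?_
  rw [← mk_mem_smul_top_iff, ← mk_mem_smul_top_iff]
  rfl

end RegularSequences

section ConormalModule

lemma exists_linearMap_of_ker_le {R A B C D : Type*} [Ring R] [AddCommGroup A] [Module R A]
    [AddCommGroup B] [Module R B] [AddCommGroup C] [Module R C] [AddCommGroup D] [Module R D]
    {θ : A →ₗ[R] B} {ρ : A →ₗ[R] C} {π : D →ₗ[R] B} (hker : LinearMap.ker θ ≤ LinearMap.ker ρ)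
    (hrange : LinearMap.range π ≤ LinearMap.range θ) :
    ∃ φ : D →ₗ[R] C, ∀ d a, π d = θ a → φ d = ρ a := by
  refine ⟨(LinearMap.ker θ).liftQ ρ hker ∘ₗ θ.quotKerEquivRange.symm ∘ₗ
    π.codRestrict (LinearMap.range θ) fun d => hrange ⟨d, rfl⟩, fun d a h => ?_⟩
  have hcod : π.codRestrict (LinearMap.range θ) (fun d => hrange ⟨d, rfl⟩) d =
      θ.quotKerEquivRange (Submodule.Quotient.mk a) := Subtype.ext h
  simp [hcod]

variable {Q : Type*} [CommRing Q] {I : Ideal Q} {c : ℕ}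

lemma HasEmbeddedDeformation.ne_top (h : HasEmbeddedDeformation I c) : I ≠ ⊤ := by
  obtain ⟨J, g, -, -, hI, hreg⟩ := h
  rw [hI, ← ofList_ofFn, Ne, ← smul_top_quotient_eq_top_iff]
  exact hreg.top_ne_smul.symm

theorem HasEmbeddedDeformation.exists_surjective (h : HasEmbeddedDeformation I c) :
    ∃ φ : I →ₗ[Q] (Fin c → Q ⧸ I), Function.Surjective φ := by
  obtain ⟨J, g, -, hgI, hI, hreg⟩ := h
  set θ : (Fin c → Q) →ₗ[Q] Q ⧸ J :=
    Fintype.linearCombination Q fun i => Ideal.Quotient.mk J (g i) with hθ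
  have hθmk (e : Fin c → Q) : θ e = Ideal.Quotient.mk J (∑ i, e i * g i) := by
    simp [hθ, Fintype.linearCombination_apply, Algebra.smul_def]
  set ρ : (Fin c → Q) →ₗ[Q] Fin c → Q ⧸ I := (Submodule.mkQ I).compLeft (Fin c)
  have hker : LinearMap.ker θ ≤ LinearMap.ker ρ := by
    intro e he
    have hsum : ∑ i, g i • Ideal.Quotient.mk J (e i) = 0 := by
      rw [← LinearMap.mem_ker.1 he, hθmk]
      simp [Algebra.smul_def, mul_comm]
    ext i
    have hei := mem_smul_top_of_sum_smul_eq_zero hreg.toIsWeaklyRegular hsum i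
    rw [mk_mem_smul_top_iff, ← hI] at hei
    exact Ideal.Quotient.eq_zero_iff_mem.2 hei
  have hrange : LinearMap.range (J.mkQ ∘ₗ I.subtype) ≤ LinearMap.range θ := by
    rintro _ ⟨⟨q, hq⟩, rfl⟩
    rw [hI] at hq
    obtain ⟨j, hj, s, hs, rfl⟩ := Submodule.mem_sup.1 hq
    obtain ⟨e, rfl⟩ := Ideal.mem_span_range_iff_exists_fun.1 hs
    refine ⟨e, (hθmk e).trans (Ideal.Quotient.eq.2 ?_)⟩
    simpa using hj
  obtain ⟨φ, hφ⟩ := exists_linearMap_of_ker_le hker hrange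
  refine ⟨φ, fun t => ?_⟩
  obtain ⟨e, rfl⟩ := (Submodule.mkQ_surjective I).comp_left t
  have hmem : ∑ i, e i * g i ∈ I := I.sum_mem fun i _ => I.mul_mem_left (e i) (hgI i)
  exact ⟨⟨_, hmem⟩, hφ ⟨_, hmem⟩ e (hθmk e).symm⟩

end ConormalModule

section MonomialColon

variable {ι : Type*} [Fintype ι] {u v : ι → ℕ} {p : ι}

/-- One less than the total degree of the exponent vector `v`, truncated to `0` at `v = 0`. Summed
over a set of generators it measures how far they are from being variables. -/
def excess (v : ι → ℕ) : ℕ :=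
  ∑ i, v i - 1

lemma excess_mono (h : u ≤ v) : excess u ≤ excess v :=
  Nat.sub_le_sub_right (Finset.sum_le_sum fun i _ => h i) 1

lemma excess_single_one [DecidableEq ι] : excess (Pi.single p 1) = 0 := by
  simp [excess]

lemma excess_pos_of_single_one_lt [DecidableEq ι] (h : Pi.single p 1 < v) : 0 < excess v := by
  have hsum : ∑ i, (Pi.single p 1 : ι → ℕ) i < ∑ i, v i := Fintype.sum_strictMono h
  rw [Finset.sum_pi_single', if_pos (Finset.mem_univ p)] at hsum
  exact Nat.sub_pos_of_lt hsum

lemma excess_tsub_single_one_lt [DecidableEq ι] (h : Pi.single p 1 < v) :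
    excess (v - Pi.single p 1) < excess v := by
  have hpos := excess_pos_of_single_one_lt h
  have hsum : ∑ i, (v - Pi.single p 1 : ι → ℕ) i + 1 = ∑ i, v i := by
    conv_rhs => rw [← tsub_add_cancel_of_le h.le]
    simp [Finset.sum_add_distrib]
  unfold excess at hpos ⊢
  omega

variable {Q : Type*} [CommRing Q] {x : ι → Q}

lemma IsPermutableWeaklyRegular.isSMulRegular_of_no_single_lt [DecidableEq ι]
    (hx : IsPermutableWeaklyRegular x) {U : Finset (ι → ℕ)} {l : ι} (hU : ∀ v ∈ U, v l = 0)
    (hlin : ∀ v ∈ U, ∀ p, ¬ Pi.single p 1 < v) :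
    IsSMulRegular (Q ⧸ monomialIdeal x (U : Set (ι → ℕ))) (x l) := by
  by_cases h0 : 0 ∈ U
  · simp [isSMulRegular_quotient_iff_mem_of_mul_mem,
      monomialIdeal_eq_top_of_zero_mem (x := x) (Finset.mem_coe.2 h0)]
  have hsingle : ∀ v ∈ U, ∃ p, Pi.single p 1 = v := fun v hv => by
    obtain ⟨p, hp⟩ := Function.ne_iff.1 (ne_of_mem_of_not_mem hv h0)
    exact ⟨p, eq_of_le_of_not_lt (single_one_le_iff.2 hp) (hlin v hv p)⟩
  set T : Finset ι := Finset.univ.filter fun p => Pi.single p 1 ∈ U with hT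
  have hideal : monomialIdeal x (U : Set (ι → ℕ)) = Ideal.span (x '' (T : Set ι)) := by
    rw [monomialIdeal]
    congr 1
    ext y
    constructor
    · rintro ⟨v, hv, rfl⟩
      obtain ⟨p, rfl⟩ := hsingle v hv
      exact ⟨p, by simpa [hT] using hv, monomialOn_single_one.symm⟩
    · rintro ⟨p, hp, rfl⟩
      exact ⟨_, by simpa [hT] using hp, monomialOn_single_one⟩
  have hlT : l ∉ T := fun hl => by simpa using hU _ (Finset.mem_filter.1 hl).2
  rw [hideal]
  exact hx T l hlT

lemma IsPermutableWeaklyRegular.isSMulRegular_quotient_monomialIdeal_coe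
    (hx : IsPermutableWeaklyRegular x) (U : Finset (ι → ℕ)) (l : ι) (hU : ∀ v ∈ U, v l = 0) :
    IsSMulRegular (Q ⧸ monomialIdeal x (U : Set (ι → ℕ))) (x l) := by
  classical
  induction hN : ∑ v ∈ U, excess v using Nat.strong_induction_on generalizing U l with
  | _ N ih =>
  subst hN
  by_cases hlin : ∀ v ∈ U, ∀ p, ¬ Pi.single p 1 < v
  · exact hx.isSMulRegular_of_no_single_lt hU hlin
  push Not at hlin
  obtain ⟨w, hw, p, hpw⟩ := hlin
  have hwp : w p ≠ 0 := single_one_le_iff.1 hpw.le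
  have hlp : l ≠ p := fun h => hwp (h ▸ hU w hw)
  set U₀ : Finset (ι → ℕ) := {v ∈ U | v p = 0}
  set U₁ : Finset (ι → ℕ) := U.image (· - Pi.single p 1) with hU₁
  have hlt₀ : ∑ v ∈ U₀, excess v < ∑ v ∈ U, excess v :=
    Finset.sum_lt_sum_of_subset (Finset.filter_subset _ _) hw
      (fun h => hwp (Finset.mem_filter.1 h).2) (excess_pos_of_single_one_lt hpw)
      fun _ _ _ => Nat.zero_le _
  have hlt_insert : ∑ v ∈ insert (Pi.single p 1) U₀, excess v < ∑ v ∈ U, excess v := by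
    rwa [Finset.sum_insert_of_eq_zero_if_notMem fun _ => excess_single_one]
  have hlt₁ : ∑ v ∈ U₁, excess v < ∑ v ∈ U, excess v :=
    (Finset.sum_image_le_of_nonneg fun _ _ => Nat.zero_le _).trans_lt
      (Finset.sum_lt_sum (fun _ _ => excess_mono tsub_le_self)
        ⟨w, hw, excess_tsub_single_one_lt hpw⟩)
  have hU₀l : ∀ v ∈ U₀, v l = 0 := fun v hv => hU v (Finset.mem_filter.1 hv).1
  have hreg₀ := ih _ hlt₀ U₀ p (fun v hv => (Finset.mem_filter.1 hv).2) rfl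
  have hreg_insert := ih _ hlt_insert (insert (Pi.single p 1) U₀) l
    (Finset.forall_mem_insert _ _ _ |>.2 ⟨Pi.single_eq_of_ne hlp 1, hU₀l⟩) rfl
  have hreg₁ := ih _ hlt₁ U₁ l
    (Finset.forall_mem_image.2 fun v hv => by simp [hU v hv]) rfl
  have hle : monomialIdeal x (U₀ : Set (ι → ℕ)) ≤ monomialIdeal x (U₁ : Set (ι → ℕ)) := by
    rw [hU₁, Finset.coe_image]
    exact (monomialIdeal_mono (Finset.coe_subset.2 (Finset.filter_subset _ _))).trans
      (monomialIdeal_le_monomialIdeal_image_tsub _)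
  rw [Finset.coe_insert, monomialIdeal_insert, monomialOn_single_one] at hreg_insert
  have hcoe₀ : {v ∈ (U : Set (ι → ℕ)) | v p = 0} = U₀ := (Finset.coe_filter _ _).symm
  have hcoe₁ : (· - Pi.single p 1) '' (U : Set (ι → ℕ)) = U₁ := Finset.coe_image.symm
  rw [monomialIdeal_eq_sup_span_mul x (U : Set (ι → ℕ)) p, hcoe₀, hcoe₁]
  exact isSMulRegular_quotient_sup_span_mul hle hreg₀ hreg_insert hreg₁

theorem IsPermutableWeaklyRegular.isSMulRegular_quotient_monomialIdeal
    (hx : IsPermutableWeaklyRegular x) {U : Set (ι → ℕ)} {l : ι} (hU : ∀ v ∈ U, v l = 0) :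
    IsSMulRegular (Q ⧸ monomialIdeal x U) (x l) := by
  classical
  refine isSMulRegular_quotient_iff_mem_of_mul_mem.2 fun q hq => ?_
  obtain ⟨F, hFU, hqF⟩ := Submodule.mem_span_finite_of_mem_span hq
  obtain ⟨V, hVU, rfl⟩ := Finset.subset_set_image_iff.1 hFU
  rw [Finset.coe_image] at hqF
  exact monomialIdeal_mono hVU (isSMulRegular_quotient_iff_mem_of_mul_mem.1
    (hx.isSMulRegular_quotient_monomialIdeal_coe V l fun v hv => hU v (hVU hv)) q hqF)

theorem IsPermutableWeaklyRegular.isSMulRegular_monomialOn (hx : IsPermutableWeaklyRegular x)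
    {U : Set (ι → ℕ)} {u : ι → ℕ} (hu : ∀ v ∈ U, ∀ l, u l = 0 ∨ v l = 0) :
    IsSMulRegular (Q ⧸ monomialIdeal x U) (monomialOn x u) := by
  refine Finset.prod_induction _ (IsSMulRegular (Q ⧸ monomialIdeal x U))
    (fun _ _ => IsSMulRegular.mul) (.one _) fun l _ => ?_
  obtain hl | hl := eq_or_ne (u l) 0
  · rw [hl, pow_zero]
    exact .one _
  · exact (hx.isSMulRegular_quotient_monomialIdeal
      fun v hv => (hu v hv l).resolve_left hl).pow _

lemma IsPermutableWeaklyRegular.isSMulRegular_quotient_span_pow {Q ι : Type*} [CommRing Q]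
    [Finite ι] {x : ι → Q} (hx : IsPermutableWeaklyRegular x) (w : ι → ℕ) {T : Set ι} {p : ι}
    (hp : p ∉ T) :
    IsSMulRegular (Q ⧸ Ideal.span ((fun l => x l ^ w l) '' T)) (x p) := by
  classical
  cases nonempty_fintype ι
  have himage : (fun l => x l ^ w l) '' T =
      monomialOn x '' ((fun l => Pi.single l (w l)) '' T) := by
    rw [Set.image_image]
    simp only [monomialOn_single]
  rw [himage]
  refine hx.isSMulRegular_quotient_monomialIdeal (Set.forall_mem_image.2 fun l hl => ?_)
  exact Pi.single_eq_of_ne (ne_of_mem_of_not_mem hl hp).symm _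

lemma IsPermutableWeaklyRegular.mul_mem_span_pow_of_update [DecidableEq ι]
    (hx : IsPermutableWeaklyRegular x) (hp : v p = 0) {k : ℕ} {r : Q}
    (hr : monomialOn x (Function.update v p k) * r ∈
      Ideal.span (Set.range fun l => x l ^ (Function.update v p k l + 1))) :
    monomialOn x v * r ∈ Ideal.span (Set.range fun l => x l ^ (v l + 1)) := by
  have hupdate : Function.update v p k = Pi.single p k + v := by
    ext l
    obtain rfl | hl := eq_or_ne l p <;> simp [*]
  have himage : (fun l => x l ^ (Function.update v p k l + 1)) '' {p}ᶜ =
      (fun l => x l ^ (v l + 1)) '' {p}ᶜ :=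
    Set.image_congr fun l hl => by rw [Function.update_of_ne hl]
  rw [span_range_eq_sup_compl _ p, himage, Function.update_self, pow_succ, hupdate,
    monomialOn_add, monomialOn_single, mul_assoc] at hr
  rw [span_range_eq_sup_compl _ p, hp, zero_add, pow_one]
  have hreg : IsSMulRegular (Q ⧸ Ideal.span ((fun l => x l ^ (v l + 1)) '' {p}ᶜ)) (x p) :=
    hx.isSMulRegular_quotient_span_pow (fun l => v l + 1) (Set.notMem_compl_iff.2 rfl)
  exact mem_span_singleton_sup_of_mul_mem (hreg.pow k) hr

theorem IsPermutableWeaklyRegular.mem_span_range_of_monomialOn_mul_mem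
    (hx : IsPermutableWeaklyRegular x) {u : ι → ℕ} {r : Q}
    (hr : monomialOn x u * r ∈ Ideal.span (Set.range fun l => x l ^ (u l + 1))) :
    r ∈ Ideal.span (Set.range x) := by
  classical
  suffices hpiecewise : ∀ T : Finset ι, monomialOn x (T.piecewise u 0) * r ∈
      Ideal.span (Set.range fun l => x l ^ (T.piecewise u 0 l + 1)) →
      r ∈ Ideal.span (Set.range x) from
    hpiecewise Finset.univ (by rwa [Finset.piecewise_univ])
  intro T
  induction T using Finset.induction_on with
  | empty => simp [monomialOn_zero]
  | insert p T hp ih =>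
    rw [Finset.piecewise_insert]
    exact fun h => ih (hx.mul_mem_span_pow_of_update (by simp [hp]) h)

theorem IsPermutableWeaklyRegular.exists_le_of_monomialOn_mul_mem
    (hx : IsPermutableWeaklyRegular x) {U : Set (ι → ℕ)} {u : ι → ℕ} {r : Q}
    (hr : r ∉ Ideal.span (Set.range x)) (hmem : monomialOn x u * r ∈ monomialIdeal x U) :
    ∃ v ∈ U, v ≤ u := by
  contrapose! hr
  refine hx.mem_span_range_of_monomialOn_mul_mem (monomialIdeal_le_iff.2 (fun v hv => ?_) hmem)
  obtain ⟨l, hl⟩ := not_forall.1 (hr v hv)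
  exact Ideal.mem_of_dvd _ ((pow_dvd_pow (x l) (not_le.1 hl)).trans
    (Finset.dvd_prod_of_mem _ (Finset.mem_univ l))) (Ideal.subset_span (Set.mem_range_self l))

theorem IsPermutableWeaklyRegular.isWeaklyRegular_map_monomialOn
    (hx : IsPermutableWeaklyRegular x) {U : Set (ι → ℕ)} {us : List (ι → ℕ)}
    (hU : ∀ u ∈ us, ∀ v ∈ U, ∀ l, u l = 0 ∨ v l = 0)
    (hus : us.Pairwise fun u v => ∀ l, u l = 0 ∨ v l = 0) :
    IsWeaklyRegular (Q ⧸ monomialIdeal x U) (us.map (monomialOn x)) := by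
  refine isWeaklyRegular_quotient_iff_take.2 fun i hi => ?_
  rw [← List.map_take, ofList_map_monomialOn, ← monomialIdeal_union, List.getElem_map]
  refine hx.isSMulRegular_monomialOn ?_
  rintro v (hv | hv) l
  · exact hU _ (List.getElem_mem _) v hv l
  · obtain ⟨j, hj, rfl⟩ := List.mem_take_iff_getElem.1 hv
    exact (List.pairwise_iff_getElem.1 hus j i _ _ (by omega) l).symm

theorem IsPermutableWeaklyRegular.isRegular_map_monomialOn
    (hx : IsPermutableWeaklyRegular x) {U : Set (ι → ℕ)} {us : List (ι → ℕ)}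
    (hU : ∀ u ∈ us, ∀ v ∈ U, ∀ l, u l = 0 ∨ v l = 0)
    (hus : us.Pairwise fun u v => ∀ l, u l = 0 ∨ v l = 0)
    (htop : monomialIdeal x (U ∪ {u | u ∈ us}) ≠ ⊤) :
    IsRegular (Q ⧸ monomialIdeal x U) (us.map (monomialOn x)) := by
  refine ⟨hx.isWeaklyRegular_map_monomialOn hU hus, ?_⟩
  rwa [ne_comm, Ne, smul_top_quotient_eq_top_iff, ofList_map_monomialOn, ← monomialIdeal_union]

end MonomialColon

section Rank

lemma exists_finset_card_eq_finrank_forall_ne_zero {R M κ : Type*} [Ring R]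
    [StrongRankCondition R] [AddCommGroup M] [Module R M] {v : κ → M}
    (hv : Submodule.span R (Set.range v) = ⊤) :
    ∃ S : Finset κ, S.card = Module.finrank R M ∧ ∀ i ∈ S, v i ≠ 0 := by
  obtain ⟨T, hT⟩ : ∃ T : Finset {j // v j ≠ 0}, T.card = Module.finrank R M := by
    cases finite_or_infinite {j // v j ≠ 0} with
    | inr _ => exact Infinite.exists_subset_card_eq _ _
    | inl _ =>
      have := Fintype.ofFinite {j // v j ≠ 0}
      have hspan : Submodule.span R (Set.range fun j : {j // v j ≠ 0} => v j) = ⊤ := by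
        rw [eq_top_iff, ← hv, Submodule.span_le]
        rintro _ ⟨j, rfl⟩
        by_cases hj : v j = 0
        · rw [hj]
          exact Submodule.zero_mem _
        · exact Submodule.subset_span ⟨⟨j, hj⟩, rfl⟩
      obtain ⟨T, -, hT⟩ := Finset.exists_subset_card_eq (finrank_le_of_span_eq_top hspan)
      exact ⟨T, hT⟩
  refine ⟨T.map (Function.Embedding.subtype _), (Finset.card_map _).trans hT, fun i hi => ?_⟩
  obtain ⟨j, -, rfl⟩ := Finset.mem_map.1 hi
  exact j.2

theorem HasEmbeddedDeformation.exists_finset_of_span_range_eq {Q κ : Type*} [CommRing Q]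
    {I P : Ideal Q} {c : ℕ} (h : HasEmbeddedDeformation I c) (hIP : I ≤ P)
    (hP : P ≠ ⊤) {f : κ → Q} (hf : ∀ j, f j ∈ I) (hgen : I ≤ Ideal.span (Set.range f)) :
    ∃ S : Finset κ, S.card = c ∧
      ∀ i ∈ S, ∃ φ : I →ₗ[Q] Q ⧸ I, ∃ r ∉ P, φ ⟨f i, hf i⟩ = Ideal.Quotient.mk I r := by
  have hgen' : Ideal.span (Set.range f) ≤ I := Ideal.span_le.2 (Set.range_subset_iff.2 hf)
  have : Nontrivial (Q ⧸ P) := Ideal.Quotient.nontrivial_iff.2 hP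
  obtain ⟨φ, hφ⟩ := h.exists_surjective
  set ψ : I →ₗ[Q] Fin c → Q ⧸ P := (Submodule.factor hIP).compLeft (Fin c) ∘ₗ φ with hψ
  have hψ_surj : Function.Surjective ψ := by
    rw [hψ, LinearMap.coe_comp]
    exact (Submodule.factor_surjective hIP).comp_left.comp hφ
  have hspan : Submodule.span (Q ⧸ P) (Set.range fun j => ψ ⟨f j, hf j⟩) = ⊤ := by
    rw [← Submodule.restrictScalars_eq_top_iff Q,
      Submodule.restrictScalars_span Q (Q ⧸ P) Ideal.Quotient.mk_surjective,
      Set.range_comp' ψ, ← Submodule.map_span,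
      (Submodule.span_range_subtype_eq_top_iff I hf).2 (hgen'.antisymm hgen), Submodule.map_top,
      LinearMap.range_eq_top.2 hψ_surj]
  obtain ⟨S, hcard, hS⟩ := exists_finset_card_eq_finrank_forall_ne_zero hspan
  refine ⟨S, hcard.trans (Module.finrank_fin_fun _), fun i hi => ?_⟩
  obtain ⟨t, ht⟩ := Function.ne_iff.1 (hS i hi)
  obtain ⟨r, hr⟩ := Ideal.Quotient.mk_surjective (φ ⟨f i, hf i⟩ t)
  refine ⟨LinearMap.proj t ∘ₗ φ, r, fun hrP => ht ?_, hr.symm⟩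
  change Submodule.factor hIP (φ ⟨f i, hf i⟩ t) = 0
  rw [← hr]
  exact Ideal.Quotient.eq_zero_iff_mem.2 hrP

end Rank

theorem IsPermutableWeaklyRegular.eq_zero_or_eq_zero_of_isAntichain {Q ι : Type*} [CommRing Q]
    [Fintype ι] {x : ι → Q} (hx : IsPermutableWeaklyRegular x) {U : Set (ι → ℕ)}
    (hU : IsAntichain (· ≤ ·) U) {u v : ι → ℕ} (hu : u ∈ U) (hv : v ∈ U) (huv : u ≠ v)
    {φ : monomialIdeal x U →ₗ[Q] Q ⧸ monomialIdeal x U} {r : Q}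
    (hr : r ∉ Ideal.span (Set.range x))
    (hφ : φ ⟨monomialOn x u, monomialOn_mem_monomialIdeal hu le_rfl⟩ = Ideal.Quotient.mk _ r)
    (l : ι) :
    u l = 0 ∨ v l = 0 := by
  have huI : monomialOn x u ∈ monomialIdeal x U := monomialOn_mem_monomialIdeal hu le_rfl
  have hvI : monomialOn x v ∈ monomialIdeal x U := monomialOn_mem_monomialIdeal hv le_rfl
  obtain ⟨s, hs⟩ := Ideal.Quotient.mk_surjective (φ ⟨monomialOn x v, hvI⟩)
  have hexponent : v - u + u = u - v + v := funext fun k => by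
    simp only [Pi.add_apply, Pi.sub_apply]
    omega
  have hsyzygy : monomialOn x (v - u) • (⟨monomialOn x u, huI⟩ : monomialIdeal x U) =
      monomialOn x (u - v) • ⟨monomialOn x v, hvI⟩ := by
    refine Subtype.ext ?_
    change monomialOn x (v - u) * monomialOn x u = monomialOn x (u - v) * monomialOn x v
    rw [← monomialOn_add, ← monomialOn_add, hexponent]
  have hmk : Ideal.Quotient.mk (monomialIdeal x U) (monomialOn x (v - u) * r) =
      Ideal.Quotient.mk _ (monomialOn x (u - v) * s) := by
    have hφsyzygy := congrArg φ hsyzygy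
    rwa [map_smul, map_smul, hφ, ← hs] at hφsyzygy
  have hmem : monomialOn x (v - u) * r ∈ monomialIdeal x (insert (u - v) U) := by
    rw [monomialIdeal_insert]
    exact Ideal.mem_span_singleton_sup.2 ⟨s, _, Ideal.Quotient.eq.1 hmk, by ring⟩
  obtain ⟨w, rfl | hw, hwle⟩ := hx.exists_le_of_monomialOn_mul_mem hr hmem
  · have hle (k : ι) : u k ≤ v k := by
      have hk : u k - v k ≤ v k - u k := hwle k
      omega
    exact absurd (hU.eq hu hv hle) huv
  · obtain rfl := hU.eq hw hv (hwle.trans tsub_le_self)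
    have hl : w l ≤ w l - u l := hwle l
    omega

lemma eq_of_dvd_of_forall_sum_eq_zero {Q κ : Type*} [CommRing Q] [Fintype κ] {f : κ → Q}
    {P : Ideal Q} (hP : P ≠ ⊤) (hf : ∀ q : κ → Q, ∑ j, q j * f j = 0 → ∀ j, q j ∈ P)
    {i j : κ} (h : f i ∣ f j) : i = j := by
  classical
  by_contra hij
  obtain ⟨t, ht⟩ := h
  have hj := hf (Pi.single j 1 - Pi.single i t)
    (by simp [sub_mul, Finset.sum_sub_distrib, Pi.single_apply, ite_mul, ht, mul_comm t]) j
  rw [Pi.sub_apply, Pi.single_eq_same, Pi.single_eq_of_ne' hij, sub_zero] at hj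
  exact hP ((Ideal.eq_top_iff_one P).2 hj)

theorem embedded_deformation_of_monomial_ring_general {Q ι κ : Type*} [CommRing Q] [Fintype ι]
    [LinearOrder κ] {x : ι → Q} (hx : IsPermutableWeaklyRegular x)
    (hxtop : Ideal.span (Set.range x) ≠ ⊤) {a : κ → ι → ℕ} (ha : ∀ i j, a i ≤ a j → i = j)
    {f : κ → Q} (hf : ∀ j, f j = monomialOn x (a j)) {I : Ideal Q}
    (hgen : Ideal.span (Set.range f) = I) {c : ℕ} (hdef : HasEmbeddedDeformation I c) :
    ∃ S : Finset κ, S.card = c ∧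
      (∀ i ∈ S, ∀ j, j ≠ i → ∀ l, a i l = 0 ∨ a j l = 0) ∧
      I = Ideal.span (f '' {j | j ∉ S}) ⊔ Ideal.span (f '' {i | i ∈ S}) ∧
      IsRegular (Q ⧸ Ideal.span (f '' {j | j ∉ S})) ((S.sort (· ≤ ·)).map f) := by
  obtain rfl : f = monomialOn x ∘ a := funext hf
  obtain rfl : monomialIdeal x (Set.range a) = I := by
    rw [← hgen, monomialIdeal, Set.range_comp]
  have hle : monomialIdeal x (Set.range a) ≤ Ideal.span (Set.range x) :=
    monomialIdeal_le_span_range fun h0 => hdef.ne_top (monomialIdeal_eq_top_of_zero_mem h0)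
  have hanti : IsAntichain (· ≤ ·) (Set.range a) := by
    rintro _ ⟨i, rfl⟩ _ ⟨j, rfl⟩ hij haij
    exact hij (congrArg a (ha i j haij))
  have hmem (j : κ) : monomialOn x (a j) ∈ monomialIdeal x (Set.range a) :=
    monomialOn_mem_monomialIdeal (Set.mem_range_self j) le_rfl
  obtain ⟨S, hcard, hS⟩ := hdef.exists_finset_of_span_range_eq hle hxtop hmem hgen.ge
  have hdisj : ∀ i ∈ S, ∀ j, j ≠ i → ∀ l, a i l = 0 ∨ a j l = 0 := by
    intro i hi j hji l
    obtain ⟨φ, r, hr, hφ⟩ := hS i hi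
    exact hx.eq_zero_or_eq_zero_of_isAntichain hanti (Set.mem_range_self i)
      (Set.mem_range_self j) (fun h => hji (ha i j h.le).symm) hr hφ l
  have hcover : a '' {j | j ∉ S} ∪ a '' {i | i ∈ S} = Set.range a := by
    rw [← Set.image_union, ← Set.image_univ]
    exact congrArg (a '' ·) (Set.compl_union_self (S : Set κ))
  have hsort : {u | u ∈ (S.sort (· ≤ ·)).map a} = a '' {i | i ∈ S} := by
    ext u
    simp only [List.mem_map, Finset.mem_sort, Set.mem_ofPred_eq, Set.mem_image]
  refine ⟨S, hcard, hdisj, ?_, ?_⟩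
  · rw [span_image_monomialOn_comp, span_image_monomialOn_comp, ← monomialIdeal_union, hcover]
  rw [span_image_monomialOn_comp, ← List.map_map]
  refine hx.isRegular_map_monomialOn ?_ ?_ ?_
  · simp only [List.mem_map, Finset.mem_sort]
    rintro _ ⟨i, hi, rfl⟩ _ ⟨j, hj, rfl⟩
    exact hdisj i hi j (ne_of_mem_of_not_mem hi hj).symm
  · exact List.pairwise_map.2 ((S.sort_nodup _).pairwise_of_forall_ne fun i hi j _ hij =>
      hdisj i ((S.mem_sort _).1 hi) j hij.symm)
  · rw [hsort, hcover]
    exact hdef.ne_top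

/-- Let `(Q,m)` be a regular local ring and `f₁,…,f_n` monomials on a regular sequence
`x₁,…,x_d ∈ m` (with nonzero exponent vectors `a_j`) minimally generating an ideal
`I ⊆ m²` (they generate `I`, and their images in `I/mI` are `k`-linearly independent, hence a
`k`-basis). If `R = Q/I` admits an embedded deformation of codimension `c`, then there is a
subset `S ⊆ {1,…,n}` with `|S| = c` such that (i) for `i ∈ S` and `j ≠ i` the supports of
`f_i` and `f_j` are disjoint, and (ii) `(f_i)_{i∈S}` is a regular sequence on
`Q/(f_j : j ∉ S)`, with `I = (f_j : j ∉ S) + (f_i : i ∈ S)`: an embedded deformation of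
codimension `c` defined by monomials. -/
theorem embedded_deformation_of_monomial_ring
    {Q : Type*} [CommRing Q] [IsNoetherianRing Q] [IsLocalRing Q]
    (hQ : IsRegularLocal Q)
    {d n : ℕ} (x : Fin d → Q) (hxm : ∀ l, x l ∈ maximalIdeal Q)
    (hx : IsRegular Q (List.ofFn x))
    (a : Fin n → Fin d → ℕ) (ha : ∀ j, a j ≠ 0)
    (f : Fin n → Q) (hf : ∀ j, f j = ∏ l, x l ^ a j l)
    (I : Ideal Q) (hIm : I ≤ maximalIdeal Q ^ 2)
    (hgen : Ideal.span (Set.range f) = I)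
    (hmin : ∀ q : Fin n → Q, (∑ j, q j * f j) ∈ maximalIdeal Q * I →
      ∀ j, q j ∈ maximalIdeal Q)
    (c : ℕ) (hdef : HasEmbeddedDeformation I c) :
    ∃ S : Finset (Fin n), S.card = c ∧
      (∀ i ∈ S, ∀ j : Fin n, j ≠ i → ∀ l, a i l = 0 ∨ a j l = 0) ∧
      I = Ideal.span (f '' {j : Fin n | j ∉ S}) ⊔ Ideal.span (f '' {i : Fin n | i ∈ S}) ∧
      IsRegular (Q ⧸ Ideal.span (f '' {j : Fin n | j ∉ S}))
        ((S.sort (· ≤ ·)).map f) := by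
  have hxtop : Ideal.span (Set.range x) ≠ ⊤ := ne_top_of_le_ne_top
    (maximalIdeal.isMaximal Q).ne_top (Ideal.span_le.2 (Set.range_subset_iff.2 hxm))
  have hanti (i j : Fin n) (hij : a i ≤ a j) : i = j :=
    eq_of_dvd_of_forall_sum_eq_zero (maximalIdeal.isMaximal Q).ne_top
      (fun q hq => hmin q (hq ▸ Ideal.zero_mem _))
      (by rw [hf, hf]; exact monomialOn_dvd_of_le hij)
  exact embedded_deformation_of_monomial_ring_general (isPermutableWeaklyRegular_of_isRegular hx)
    hxtop hanti hf hgen hdef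
end

section
/- Let k be a field, let Q = k[x₁,…,x_d] be a polynomial ring, and let S and T be disjoint subsets of {1,…,d}. Let I₁ be an ideal of Q generated by finitely many monomials involving only the variables x_l with l ∈ S, and let I₂ be an ideal generated by finitely many monomials involving only the variables x_l with l ∈ T. Then for every i ≥ 1, the Tor module Tor_i^Q(Q/I₁, Q/I₂) is zero. -/
open MvPolynomial CategoryTheory

/-! Since `S` and `T` are disjoint, `Q = A ⊗ B` with `A = k[x_l : l ∈ S]` and
`B = k[x_l : l ∉ S]`, and `I₁ = JQ`, `I₂ = J'Q` for ideals `J` of `A` and `J'` of `B`. Tensoring a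
`B`-projective resolution of `B/J'` with the flat `B`-algebra `Q` gives a `Q`-projective resolution
of `Q/I₂`. Tensoring it further over `Q` with `Q/I₁` amounts to tensoring the original resolution
over `B` with `Q/I₁ = A/J ⊗ B`, which is flat over `B`, so no higher homology appears. -/

open scoped TensorProduct

universe u

section DerivedFunctors

variable {C D E : Type*} [Category* C] [Category* D] [Category* E]
  [Abelian C] [Abelian D] [Abelian E]
  [HasProjectiveResolutions C] [HasProjectiveResolutions D]

theorem isZero_leftDerived_obj_of_preservesHomology_comp (G : C ⥤ D) (F : D ⥤ E)
    [G.Additive] [F.Additive] [G.PreservesProjectiveObjects] [G.PreservesHomology]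
    [(G ⋙ F).PreservesHomology] (X : C) (n : ℕ) :
    Limits.IsZero ((F.leftDerived (n + 1)).obj (G.obj X)) := by
  let P := projectiveResolution X
  have exact_comp : (((G ⋙ F).mapHomologicalComplex _).obj P.complex).ExactAt (n + 1) :=
    ((HomologicalComplex.exactAt_iff ..).1 (P.complex_exactAt_succ n)).map (G ⋙ F)
  exact exact_comp.isZero_homology.of_iso
    ((G.mapProjectiveResolution P).isoLeftDerivedObj F (n + 1))

end DerivedFunctors

section ExtendScalars

open ModuleCat MonoidalCategory

theorem lTensor_baseChange_exact {R S : Type*} [CommRing R] [CommRing S] [Algebra R S]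
    (M : Type*) [AddCommGroup M] [Module R M] [Module S M] [IsScalarTower R S M]
    [Module.Flat R M] {N₁ N₂ N₃ : Type*} [AddCommGroup N₁] [AddCommGroup N₂] [AddCommGroup N₃]
    [Module R N₁] [Module R N₂] [Module R N₃] {f : N₁ →ₗ[R] N₂} {g : N₂ →ₗ[R] N₃}
    (hfg : Function.Exact f g) :
    Function.Exact ((f.baseChange S).lTensor M) ((g.baseChange S).lTensor M) :=
  (Function.Exact.iff_of_ladder_linearEquiv
    (TensorProduct.AlgebraTensorModule.lTensor_comp_cancelBaseChange R S S f)
    (TensorProduct.AlgebraTensorModule.lTensor_comp_cancelBaseChange R S S g)).1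
    (Module.Flat.lTensor_exact M hfg)

variable {R S : Type u} [CommRing R] [CommRing S] (f : R →+* S)

instance extendScalars_additive : (extendScalars.{u, u, u} f).Additive :=
  (extendRestrictScalarsAdj f).left_adjoint_additive

instance extendScalars_preservesProjectiveObjects :
    (extendScalars.{u, u, u} f).PreservesProjectiveObjects where
  projective_obj hP := (extendRestrictScalarsAdj f).map_projective _ hP

theorem extendScalars_comp_tensorLeft_preservesHomology (M : ModuleCat.{u} S)
    [hM : Module.Flat R ((restrictScalars f).obj M)] :
    (extendScalars.{u, u, u} f ⋙ tensorLeft M).PreservesHomology := by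
  refine Functor.preservesHomology_of_map_exact _ fun K hK ↦ ?_
  rw [ShortComplex.ShortExact.moduleCat_exact_iff_function_exact] at hK ⊢
  algebraize [f]
  let : Module R M := Module.compHom M f
  have : IsScalarTower R S M := .of_algebraMap_smul fun _ _ ↦ rfl
  have : Module.Flat R M := hM
  exact lTensor_baseChange_exact (S := S) M hK

theorem isZero_tor_extendScalars {f : R →+* S} (hf : f.Flat) (M : ModuleCat.{u} S)
    [Module.Flat R ((restrictScalars f).obj M)] (N : ModuleCat.{u} R) (n : ℕ) :
    Limits.IsZero (((Tor (ModuleCat.{u} S) (n + 1)).obj M).obj ((extendScalars f).obj N)) := by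
  have := preservesFiniteLimits_extendScalars_of_flat hf
  have := extendScalars_comp_tensorLeft_preservesHomology f M
  exact isZero_leftDerived_obj_of_preservesHomology_comp (extendScalars f) (tensorLeft M) N n

/-- The isomorphism `S ⊗[R] (R ⧸ J) ≅ S ⧸ JS` in the category of `S`-modules. It presents a
quotient by an extended ideal as an extension of scalars. -/
noncomputable def extendScalarsQuotientIso (J : Ideal R) :
    (extendScalars f).obj (of R (R ⧸ J)) ≅ of S (S ⧸ J.map f) := by
  algebraize [f]
  exact (Ideal.qoutMapEquivTensorQout S (I := J)).symm.toModuleIso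

end ExtendScalars

section LinearDisjoint

variable {R : Type*} [CommRing R]

theorem flat_of_linearDisjoint_of_sup_eq_top {Q : Type*} [CommRing Q] [Algebra R Q]
    {A B : Subalgebra R Q} (hAB : A.LinearDisjoint B) (hsup : A ⊔ B = ⊤) [Module.Flat R B] :
    Module.Flat A Q :=
  .of_linearEquiv (hAB.mulMapLeftOfSupEqTop hsup).symm.toLinearEquiv

theorem flat_quotient_map_of_linearDisjoint_of_sup_eq_top {Q : Type*} [CommRing Q] [Algebra R Q]
    {A B : Subalgebra R Q} (hAB : A.LinearDisjoint B) (hsup : A ⊔ B = ⊤)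
    (J : Ideal B) [Module.Flat R (B ⧸ J)] :
    Module.Flat A (Q ⧸ J.map (algebraMap B Q)) := by
  let e : A ⊗[R] B ≃ₐ[A] Q := hAB.mulMapLeftOfSupEqTop hsup
  let ι : B →ₐ[R] A ⊗[R] B := Algebra.TensorProduct.includeRight
  have map_eq : J.map (algebraMap B Q) = (J.map ι).map (e : A ⊗[R] B →+* Q) := by
    have comp_eq : algebraMap B Q = (e : A ⊗[R] B →+* Q).comp ι.toRingHom := by
      ext b
      simp [e, ι]
    rw [comp_eq]
    exact (Ideal.map_map _ _).symm
  exact .of_linearEquiv ((Algebra.TensorProduct.tensorQuotientEquiv (R := R) A B A J).trans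
    (Ideal.quotientEquivAlg _ _ e map_eq)).symm.toLinearEquiv

theorem isZero_tor_of_linearDisjoint_of_sup_eq_top {Q : Type u} [CommRing Q] [Algebra R Q]
    {A B : Subalgebra R Q} (hAB : A.LinearDisjoint B) (hsup : A ⊔ B = ⊤) [Module.Flat R A]
    (J : Ideal A) [Module.Flat R (A ⧸ J)] (J' : Ideal B) (n : ℕ) :
    Limits.IsZero (((Tor (ModuleCat.{u} Q) (n + 1)).obj
      (.of Q (Q ⧸ J.map (algebraMap A Q)))).obj (.of Q (Q ⧸ J'.map (algebraMap B Q)))) := by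
  have hsup' : B ⊔ A = ⊤ := by rwa [sup_comm]
  have flat_Q : (algebraMap B Q).Flat :=
    RingHom.flat_algebraMap_iff.2 (flat_of_linearDisjoint_of_sup_eq_top hAB.symm hsup')
  have : Module.Flat B ((ModuleCat.restrictScalars (algebraMap B Q)).obj
      (.of Q (Q ⧸ J.map (algebraMap A Q)))) :=
    flat_quotient_map_of_linearDisjoint_of_sup_eq_top hAB.symm hsup' J
  exact (isZero_tor_extendScalars flat_Q _ (.of B (B ⧸ J')) n).of_iso
    (Functor.mapIso _ (extendScalarsQuotientIso _ J').symm)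

theorem map_algebraMap_span_preimage_val {R Q : Type*} [CommSemiring R] [CommSemiring Q]
    [Algebra R Q] {A : Subalgebra R Q} {s : Set Q} (hs : s ⊆ A) :
    (Ideal.span (Subtype.val ⁻¹' s : Set A)).map (algebraMap A Q) = Ideal.span s := by
  rw [Ideal.map_span]
  congr 1
  exact (Subtype.image_preimage_coe _ s).trans (Set.inter_eq_right.2 hs)

theorem flat_quotient_of_flat_quotient_map_of_leftInverse {A Q : Type*} [CommRing A] [CommRing Q]
    [Algebra R A] [Algebra R Q] (i : A →ₐ[R] Q) (r : Q →ₐ[R] A) (hri : Function.LeftInverse r i)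
    {J : Ideal A} {I : Ideal Q} (map_J : J.map i = I) [Module.Flat R (Q ⧸ I)] :
    Module.Flat R (A ⧸ J) := by
  have le_comap : J ≤ I.comap i := Ideal.map_le_iff_le_comap.1 map_J.le
  have map_le_comap : I ≤ J.comap r :=
    map_J ▸ Ideal.map_le_iff_le_comap.2 fun a ha ↦ by simpa [hri a] using ha
  refine .of_retract (Ideal.quotientMapₐ I i le_comap).toLinearMap
    (Ideal.quotientMapₐ J r map_le_comap).toLinearMap (LinearMap.ext fun x ↦ ?_)
  obtain ⟨a, rfl⟩ := Ideal.Quotient.mk_surjective x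
  exact congrArg (Ideal.Quotient.mk J) (hri a)

end LinearDisjoint

section Supported

variable (k : Type*) {σ : Type*}

theorem linearDisjoint_supported [CommRing k] {S T : Set σ} (hST : Disjoint S T) :
    (supported k S).LinearDisjoint (supported k T) := by
  let f : MvPolynomial S k ⊗[k] MvPolynomial T k →ₐ[k] MvPolynomial σ k :=
    (rename (Sum.elim (↑) (↑))).comp (tensorEquivSum k S T k).toAlgHom
  have f_injective : Function.Injective f :=
    (rename_injective _ (Subtype.val_injective.sumElim Subtype.val_injective
      fun x y ↦ hST.ne_of_mem x.2 y.2)).comp (tensorEquivSum k S T k).injective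
  have f_comp_includeLeft : f.comp Algebra.TensorProduct.includeLeft = rename ((↑) : S → σ) := by
    ext
    simp [f]
  have f_comp_includeRight : f.comp Algebra.TensorProduct.includeRight = rename ((↑) : T → σ) := by
    ext
    simp [f]
  rw [supported_eq_range_rename, supported_eq_range_rename, ← f_comp_includeLeft,
    ← f_comp_includeRight, AlgHom.range_comp, AlgHom.range_comp]
  exact (Subalgebra.LinearDisjoint.include_range k _ _).map f f_injective

theorem supported_sup_supported_compl [CommSemiring k] (S : Set σ) :
    supported k S ⊔ supported k Sᶜ = ⊤ := by
  rw [supported, supported, ← Algebra.adjoin_union, ← Set.image_union, Set.union_compl_self,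
    ← supported, supported_univ]

instance flat_supported [CommRing k] (S : Set σ) : Module.Flat k (supported k S) :=
  .of_linearEquiv (supportedEquivMvPolynomial S).toLinearEquiv

theorem exists_leftInverse_supported_val [CommSemiring k] (S : Set σ) :
    ∃ r : MvPolynomial σ k →ₐ[k] supported k S, Function.LeftInverse r (supported k S).val := by
  let e := supportedEquivMvPolynomial (R := k) S
  have val_symm (p : MvPolynomial S k) : ((e.symm p : supported k S) : MvPolynomial σ k) =
      rename (↑) p := by
    simp [e, supportedEquivMvPolynomial]
  refine ⟨e.symm.toAlgHom.comp (killCompl Subtype.val_injective), fun a ↦ ?_⟩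
  obtain ⟨p, rfl⟩ := e.symm.surjective a
  simp [val_symm, killCompl_rename_app]

variable {k}

theorem prod_X_pow_mem_supported [CommSemiring k] [Fintype σ] {S : Set σ} {a : σ → ℕ}
    (ha : ∀ l ∉ S, a l = 0) : ∏ l, (X l : MvPolynomial σ k) ^ a l ∈ supported k S := by
  refine prod_mem fun l _ ↦ ?_
  by_cases hl : l ∈ S
  · exact pow_mem (Algebra.subset_adjoin (Set.mem_image_of_mem X hl)) _
  · simp [ha l hl]

end Supported

theorem tor_vanishes_of_monomial_ideals_disjoint_variables_general
    {k σ : Type*} [CommRing k] {S T : Set σ} (hST : Disjoint S T)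
    {s t : Set (MvPolynomial σ k)} (hs : s ⊆ supported k S) (ht : t ⊆ supported k T)
    [Module.Flat k (MvPolynomial σ k ⧸ Ideal.span s)] (i : ℕ) (hi : 1 ≤ i) :
    Limits.IsZero
      (((Tor (ModuleCat (MvPolynomial σ k)) i).obj
          (ModuleCat.of (MvPolynomial σ k) (MvPolynomial σ k ⧸ Ideal.span s))).obj
        (ModuleCat.of (MvPolynomial σ k) (MvPolynomial σ k ⧸ Ideal.span t))) := by
  obtain ⟨n, rfl⟩ := Nat.exists_eq_add_of_le' hi
  obtain ⟨r, hr⟩ := exists_leftInverse_supported_val k S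
  let J : Ideal (supported k S) := Ideal.span (Subtype.val ⁻¹' s)
  let J' : Ideal (supported k Sᶜ) := Ideal.span (Subtype.val ⁻¹' t)
  have map_J : J.map (algebraMap _ _) = Ideal.span s := map_algebraMap_span_preimage_val hs
  have map_J' : J'.map (algebraMap _ _) = Ideal.span t :=
    map_algebraMap_span_preimage_val (ht.trans (supported_mono hST.subset_compl_left))
  have := flat_quotient_of_flat_quotient_map_of_leftInverse _ r hr map_J
  rw [← map_J, ← map_J']
  exact isZero_tor_of_linearDisjoint_of_sup_eq_top (linearDisjoint_supported k disjoint_compl_right)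
    (supported_sup_supported_compl k S) J J' n

/-- Let `Q = k[x₁,…,x_d]` and let `S`, `T` be disjoint subsets of the variables. If `I₁` is
generated by finitely many monomials involving only variables in `S`, and `I₂` by finitely
many monomials involving only variables in `T`, then `Tor_i^Q(Q/I₁, Q/I₂) = 0` for all
`i ≥ 1`. -/
theorem tor_vanishes_of_monomial_ideals_disjoint_variables
    {k : Type*} [Field k] {d : ℕ} (S T : Finset (Fin d)) (hST : Disjoint S T)
    {m₁ m₂ : ℕ} (a : Fin m₁ → Fin d → ℕ) (b : Fin m₂ → Fin d → ℕ)
    (ha : ∀ i l, l ∉ S → a i l = 0) (hb : ∀ i l, l ∉ T → b i l = 0)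
    (I₁ I₂ : Ideal (MvPolynomial (Fin d) k))
    (hI₁ : I₁ = Ideal.span (Set.range fun i => ∏ l, (X l : MvPolynomial (Fin d) k) ^ a i l))
    (hI₂ : I₂ = Ideal.span (Set.range fun i => ∏ l, (X l : MvPolynomial (Fin d) k) ^ b i l)) :
    ∀ i : ℕ, 1 ≤ i →
      Limits.IsZero
        (((Tor (ModuleCat (MvPolynomial (Fin d) k)) i).obj
            (ModuleCat.of (MvPolynomial (Fin d) k) (MvPolynomial (Fin d) k ⧸ I₁))).obj
          (ModuleCat.of (MvPolynomial (Fin d) k) (MvPolynomial (Fin d) k ⧸ I₂))) := by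
  subst hI₁ hI₂
  exact tor_vanishes_of_monomial_ideals_disjoint_variables_general (Finset.disjoint_coe.2 hST)
    (Set.range_subset_iff.2 fun i ↦ prod_X_pow_mem_supported (ha i))
    (Set.range_subset_iff.2 fun i ↦ prod_X_pow_mem_supported (hb i))
end
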